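/- The sequent ⊢ (B⊥, A⊥⅋(A⊗B)) (the translation of the acLL sequent B ⊢ A→(A⊗B)) is provable in the classical system CNL, and it is not provable in CNL without the top-level associativity rules A1 and A2. -/

import Mathlib

set_option autoImplicit false

namespace CNL

/-- Formulas of classical non-associative non-commutative linear logic. -/
inductive Form : Type where
  | pos : ℕ → Form
  | neg : ℕ → Form
  | tensor : Form → Form → Form
  | par : Form → Form → Form
  | one : Form
  | bot : Form
  | oplus : Form → Form → Form
  | with' : Form → Form → Form
  | zero : Form
  | top : Form

/-- Structures: binary trees of formulas, with an empty structure;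
`(∅,Γ)` and `(Γ,∅)` are identified with `Γ` via the smart constructor `comma`. -/
inductive Struct : Type where
  | emp : Struct
  | leaf : Form → Struct
  | pair : Struct → Struct → Struct

/-- Pairing of structures, erasing empty substructures. -/
def Struct.comma : Struct → Struct → Struct
  | .emp, Δ => Δ
  | Γ, .emp => Γ
  | Γ, Δ => .pair Γ Δ

/-- Contexts with one hole. -/
inductive Ctx : Type where
  | hole : Ctx
  | pairL : Ctx → Struct → Ctx
  | pairR : Struct → Ctx → Ctx

/-- Filling the hole of a context with a structure. -/
def Ctx.fill : Ctx → Struct → Struct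
  | .hole, Ξ => Ξ
  | .pairL R Δ, Ξ => (fill R Ξ).comma Δ
  | .pairR Γ R, Ξ => Γ.comma (fill R Ξ)

/-- Derivability in CNL.  The first Boolean flag indicates whether the
top-level exchange rule `E` may be used, the second whether the top-level
associativity rules `A1` and `A2` may be used; `CNLDer true true` is full CNL. -/
inductive CNLDer : Bool → Bool → Struct → Prop where
  | initP {e a : Bool} (n : ℕ) :
      CNLDer e a (.pair (.leaf (.pos n)) (.leaf (.neg n)))
  | initN {e a : Bool} (n : ℕ) :
      CNLDer e a (.pair (.leaf (.neg n)) (.leaf (.pos n)))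
  | tensor {e a : Bool} {Γ Δ : Struct} {F G : Form} :
      CNLDer e a (Γ.comma (.leaf G)) → CNLDer e a (Δ.comma (.leaf F)) →
      CNLDer e a ((Γ.comma Δ).comma (.leaf (.tensor F G)))
  | par {e a : Bool} (R : Ctx) {F G : Form} :
      CNLDer e a (R.fill (.pair (.leaf F) (.leaf G))) →
      CNLDer e a (R.fill (.leaf (.par F G)))
  | oplus₁ {e a : Bool} (R : Ctx) {F1 F2 : Form} :
      CNLDer e a (R.fill (.leaf F1)) → CNLDer e a (R.fill (.leaf (.oplus F1 F2)))
  | oplus₂ {e a : Bool} (R : Ctx) {F1 F2 : Form} :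
      CNLDer e a (R.fill (.leaf F2)) → CNLDer e a (R.fill (.leaf (.oplus F1 F2)))
  | with' {e a : Bool} (R : Ctx) {F1 F2 : Form} :
      CNLDer e a (R.fill (.leaf F1)) → CNLDer e a (R.fill (.leaf F2)) →
      CNLDer e a (R.fill (.leaf (.with' F1 F2)))
  | bot {e a : Bool} (R : Ctx) :
      CNLDer e a (R.fill .emp) → CNLDer e a (R.fill (.leaf .bot))
  | one {e a : Bool} : CNLDer e a (.leaf .one)
  | top {e a : Bool} (R : Ctx) : CNLDer e a (R.fill (.leaf .top))
  | exch {a : Bool} {Γ Δ : Struct} :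
      CNLDer true a (Δ.comma Γ) → CNLDer true a (Γ.comma Δ)
  | assoc₁ {e : Bool} {Γ Δ Θ : Struct} :
      CNLDer e true (Γ.comma (Δ.comma Θ)) → CNLDer e true ((Γ.comma Δ).comma Θ)
  | assoc₂ {e : Bool} {Γ Δ Θ : Struct} :
      CNLDer e true ((Γ.comma Δ).comma Θ) → CNLDer e true (Γ.comma (Δ.comma Θ))

end CNL

namespace CNL

/-!
Read every `⅋` as a comma and `⊥` as the empty structure. On the resulting trees the rules `⅋` and
`⊥` are invisible, and the additive rules need an additive leaf. Without associativity only the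
initial rules, the axiom for `1`, the tensor rule and exchange remain, so a derivable tree without
additive leaves has at most two leaves or has a tensor as an immediate subtree of its root.
The tree `(B⊥, (A⊥, A⊗B))` has neither property: its tensor lies one level too deep, and only
associativity can lift it.
-/

namespace Struct

@[simp]
theorem emp_comma (Γ : Struct) : emp.comma Γ = Γ := by
  simp only [comma]

@[simp]
theorem comma_emp (Γ : Struct) : Γ.comma emp = Γ := by
  cases Γ <;> rfl

end Struct

/-- The structure obtained from a formula by reading `⅋` as a comma and `⊥` as the empty structure,
down to the first other connective on each branch. -/
def Form.unfold : Form → Struct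
  | .par F G => F.unfold.comma G.unfold
  | .bot => .emp
  | F => .leaf F

namespace Struct

/-- The structure with every leaf replaced by its unfolding, which makes the rules `⅋` and `⊥`
invisible. -/
def unfold : Struct → Struct
  | emp => emp
  | leaf F => F.unfold
  | pair Γ Δ => Γ.unfold.comma Δ.unfold

@[simp]
theorem unfold_comma (Γ Δ : Struct) : (Γ.comma Δ).unfold = Γ.unfold.comma Δ.unfold := by
  cases Γ <;> cases Δ <;> simp only [emp_comma, comma_emp, unfold] <;> rfl

theorem unfold_fill_congr (R : Ctx) {Γ Δ : Struct} (h : Γ.unfold = Δ.unfold) :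
    (R.fill Γ).unfold = (R.fill Δ).unfold := by
  induction R with
  | hole => exact h
  | pairL R Θ ih | pairR Θ R ih => simp only [Ctx.fill, unfold_comma, ih]

theorem unfold_fill_par (R : Ctx) (F G : Form) :
    (R.fill (leaf (.par F G))).unfold = (R.fill (pair (leaf F) (leaf G))).unfold :=
  unfold_fill_congr R rfl

theorem unfold_fill_bot (R : Ctx) : (R.fill (leaf .bot)).unfold = (R.fill emp).unfold :=
  unfold_fill_congr R rfl

/-- No leaf is the principal formula of an additive rule. The constant `0`, which has no rule, may
occur. -/
def NoAdditiveRedex : Struct → Prop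
  | leaf (.oplus _ _) | leaf (.with' _ _) | leaf .top => False
  | emp | leaf _ => True
  | pair Γ Δ => Γ.NoAdditiveRedex ∧ Δ.NoAdditiveRedex

theorem noAdditiveRedex_comma {Γ Δ : Struct} :
    (Γ.comma Δ).NoAdditiveRedex ↔ Γ.NoAdditiveRedex ∧ Δ.NoAdditiveRedex := by
  cases Γ <;> cases Δ <;> simp [comma, NoAdditiveRedex]

theorem NoAdditiveRedex.of_unfold_fill {R : Ctx} {Γ : Struct}
    (h : (R.fill Γ).unfold.NoAdditiveRedex) : Γ.unfold.NoAdditiveRedex := by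
  induction R with
  | hole => exact h
  | pairL R Δ ih =>
    rw [Ctx.fill, unfold_comma, noAdditiveRedex_comma] at h
    exact ih h.1
  | pairR Δ R ih =>
    rw [Ctx.fill, unfold_comma, noAdditiveRedex_comma] at h
    exact ih h.2

/-- An over-approximation, closed under exchange, of the unfolded sequents that the initial, `1` and
tensor rules conclude: at most two formulas, or a tensor as an immediate subtree of the root. The
two formulas need not be dual literals. -/
inductive RootReducible : Struct → Prop where
  | leaf (F : Form) : RootReducible (.leaf F)
  | leaves (F G : Form) : RootReducible (.pair (.leaf F) (.leaf G))
  | tensorLeft (F G : Form) (Γ : Struct) : RootReducible (.pair (.leaf (.tensor F G)) Γ)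
  | tensorRight (Γ : Struct) (F G : Form) : RootReducible (.pair Γ (.leaf (.tensor F G)))

namespace RootReducible

theorem comma_tensor (Γ : Struct) (F G : Form) :
    RootReducible (Γ.comma (.leaf (.tensor F G))) := by
  cases Γ with
  | emp => exact leaf _
  | leaf | pair => exact tensorRight _ F G

theorem pair_swap {Γ Δ : Struct} (h : RootReducible (.pair Γ Δ)) :
    RootReducible (.pair Δ Γ) := by
  cases h with
  | leaves F G => exact leaves G F
  | tensorLeft F G => exact tensorRight Δ F G
  | tensorRight _ F G => exact tensorLeft F G Γ

theorem comma_swap {Γ Δ : Struct} (h : RootReducible (Γ.comma Δ)) :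
    RootReducible (Δ.comma Γ) := by
  cases Γ <;> cases Δ <;> first | exact h | exact pair_swap h

end RootReducible

end Struct

theorem CNLDer.rootReducible_unfold {e : Bool} {Γ : Struct} (h : CNLDer e false Γ)
    (hΓ : Γ.unfold.NoAdditiveRedex) : Γ.unfold.RootReducible := by
  generalize ha : false = a at h
  induction h with
  | initP | initN => exact .leaves _ _
  | one => exact .leaf _
  | tensor =>
    rw [Struct.unfold_comma]
    exact .comma_tensor _ _ _
  | par R _ ih =>
    rw [Struct.unfold_fill_par] at hΓ ⊢
    exact ih hΓ ha
  | bot R _ ih =>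
    rw [Struct.unfold_fill_bot] at hΓ ⊢
    exact ih hΓ ha
  | oplus₁ | oplus₂ | with' | top => exact hΓ.of_unfold_fill.elim
  | exch _ ih =>
    rw [Struct.unfold_comma] at hΓ ih ⊢
    rw [Struct.noAdditiveRedex_comma] at hΓ ih
    exact (ih hΓ.symm ha).comma_swap
  | assoc₁ | assoc₂ => contradiction

theorem CNLDer.par_tensor {e : Bool} {Γ : Struct} {A A' B : Form}
    (hB : CNLDer e true (Γ.comma (.leaf B))) (hA : CNLDer e true (.pair (.leaf A') (.leaf A))) :
    CNLDer e true (Γ.comma (.leaf (.par A' (.tensor A B)))) :=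
  .par (.pairR Γ .hole) (.assoc₂ (Δ := .leaf A') (Θ := .leaf (.tensor A B))
    (.tensor (Δ := .leaf A') hB hA))

theorem associativity_needed_general (e : Bool) (n m : ℕ) :
    CNLDer e true
      (.pair (.leaf (.neg m)) (.leaf (.par (.neg n) (.tensor (.pos n) (.pos m))))) ∧
    ¬ CNLDer e false
      (.pair (.leaf (.neg m)) (.leaf (.par (.neg n) (.tensor (.pos n) (.pos m))))) := by
  constructor
  · exact .par_tensor (Γ := .leaf (.neg m)) (.initN m) (.initN n)
  · intro h
    have h_root : Struct.RootReducible
        (.pair (.leaf (.neg m)) (.pair (.leaf (.neg n)) (.leaf (.tensor (.pos n) (.pos m))))) :=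
      h.rootReducible_unfold ⟨trivial, trivial, trivial⟩
    cases h_root

/-- The sequent `⊢ (B⊥, A⊥⅋(A⊗B))` — the translation of the acLL sequent
`B ⊢ A→(A⊗B)`, where `A`, `B` are atoms — is provable in CNL, and it is not
provable in CNL without the top-level associativity rules `A1` and `A2`. -/
theorem associativity_needed (n m : ℕ) :
    CNLDer true true
      (.pair (.leaf (.neg m)) (.leaf (.par (.neg n) (.tensor (.pos n) (.pos m))))) ∧
    ¬ CNLDer true false
      (.pair (.leaf (.neg m)) (.leaf (.par (.neg n) (.tensor (.pos n) (.pos m))))) :=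
  associativity_needed_general true n m

end CNL
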